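/- Let (▷,σ) be a cocycle datum for a Hopf algebra H on an algebra B, let P = B⊗H be the cocycle cross product algebra with product (b#h)(c#g) = b(h_{(1)}▷c)σ(h_{(2)},g_{(1)}) # h_{(3)}g_{(2)}, and define the lifted canonical map Can : P⊗P → P⊗H by Can(p ⊗ (c#f)) := p·(c#f_{(1)}) ⊗ f_{(2)}. Then for all b ∈ B and g,h ∈ H: (i) Can( (b#g)·(σ⁻¹(S(h_{(2)}), h_{(3)}) # S(h_{(1)})) ⊗ (1#h_{(4)}) ) = (b#g) ⊗ h; and (ii) (b # h_{(1)})·(σ⁻¹(S(h_{(3)}), h_{(4)}) # S(h_{(2)})) ⊗ h_{(5)} = (b # 1) ⊗ h in P⊗H. -/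

import Mathlib

/-!
Write `u(h) = 1 # h` and `t(h) = σ⁻¹(S(h₍₂₎), h₍₃₎) # S(h₍₁₎)`. Both identities say that `t` is a
convolution inverse of `u` in the cross product.

* `t * u = ε` (`translation_mult_one`) follows from `S` reversing the coproduct, `σ⁻¹ * σ = ε` and
  the antipode axiom. Identity (i) follows from it by the associativity
  `(x · y) · (1 # f) = x · (y · (1 # f))` (`mult_assoc_one`), which is the cocycle identity.
* `(b # h₍₁₎) · t(h₍₂₎) = ε(h) (b # 1)` (`mult_translation`), which is (ii), reduces to
  `(h₍₁₎ ▷ σ⁻¹(S(h₍₄₎), h₍₅₎)) σ(h₍₂₎, S(h₍₃₎)) = ε(h)` (`act_sigmaInv_mul_sigma`). Since `▷` is a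
  measuring, `h ▷ σ⁻¹` is inverse to `h ▷ σ`, so the cocycle identity reads
  `(h₍₁₎ ▷ σ⁻¹(g₍₁₎, f₍₁₎)) σ(h₍₂₎, g₍₂₎) σ(h₍₃₎g₍₃₎, f₍₂₎) = σ(h, gf)`; it is evaluated on
  `h₍₁₎ ⊗ S(h₍₂₎) ⊗ h₍₃₎`.

The Sweedler calculus is carried out with matrix coefficients: over a field every element of `H` is a
linear combination of entries of finite matrices `c` with `Δ(cᵢⱼ) = ∑ₗ cᵢₗ ⊗ cₗⱼ`, `ε(cᵢⱼ) = δᵢⱼ`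
(`exists_isMultMatrix`). Such matrices are closed under products and under `c ↦ S(c)ᵀ`, and
convolution identities become identities between matrix products.
-/

open scoped TensorProduct
open Coalgebra

noncomputable section

section SweedlerDefs

variable (k : Type*) [Field k]
variable (H : Type*) [Ring H] [Bialgebra k H]

/-- Left-nested triple comultiplication `h ↦ (h₍₁₎ ⊗ h₍₂₎) ⊗ h₍₃₎`. -/
def Δ3 : H →ₗ[k] (H ⊗[k] H) ⊗[k] H :=
  (LinearMap.rTensor H (Coalgebra.comul (R := k) (A := H))) ∘ₗ Coalgebra.comul

/-- Left-nested fourfold comultiplication. -/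
def Δ4 : H →ₗ[k] ((H ⊗[k] H) ⊗[k] H) ⊗[k] H :=
  (LinearMap.rTensor H (Δ3 k H)) ∘ₗ Coalgebra.comul

/-- Left-nested fivefold comultiplication. -/
def Δ5 : H →ₗ[k] (((H ⊗[k] H) ⊗[k] H) ⊗[k] H) ⊗[k] H :=
  (LinearMap.rTensor H (Δ4 k H)) ∘ₗ Coalgebra.comul

/-- Left-nested sixfold comultiplication. -/
def Δ6 : H →ₗ[k] ((((H ⊗[k] H) ⊗[k] H) ⊗[k] H) ⊗[k] H) ⊗[k] H :=
  (LinearMap.rTensor H (Δ5 k H)) ∘ₗ Coalgebra.comul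

/-- `IsRep2 k H h h1 h2` says that `Δh = ∑ᵢ h1 i ⊗ h2 i`, i.e. the families `h1, h2`
realise the Sweedler legs `h₍₁₎ ⊗ h₍₂₎`. -/
def IsRep2 {n : ℕ} (h : H) (h1 h2 : Fin n → H) : Prop :=
  Coalgebra.comul (R := k) h = ∑ i, h1 i ⊗ₜ[k] h2 i

/-- A representation of the Sweedler legs `h₍₁₎ ⊗ h₍₂₎ ⊗ h₍₃₎`. -/
def IsRep3 {n : ℕ} (h : H) (h1 h2 h3 : Fin n → H) : Prop :=
  Δ3 k H h = ∑ i, (h1 i ⊗ₜ[k] h2 i) ⊗ₜ[k] h3 i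

/-- A representation of the Sweedler legs `h₍₁₎ ⊗ h₍₂₎ ⊗ h₍₃₎ ⊗ h₍₄₎`. -/
def IsRep4 {n : ℕ} (h : H) (h1 h2 h3 h4 : Fin n → H) : Prop :=
  Δ4 k H h = ∑ i, ((h1 i ⊗ₜ[k] h2 i) ⊗ₜ[k] h3 i) ⊗ₜ[k] h4 i

/-- A representation of the Sweedler legs `h₍₁₎ ⊗ ⋯ ⊗ h₍₅₎`. -/
def IsRep5 {n : ℕ} (h : H) (h1 h2 h3 h4 h5 : Fin n → H) : Prop :=
  Δ5 k H h = ∑ i, (((h1 i ⊗ₜ[k] h2 i) ⊗ₜ[k] h3 i) ⊗ₜ[k] h4 i) ⊗ₜ[k] h5 i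

/-- A representation of the Sweedler legs `h₍₁₎ ⊗ ⋯ ⊗ h₍₆₎`. -/
def IsRep6 {n : ℕ} (h : H) (h1 h2 h3 h4 h5 h6 : Fin n → H) : Prop :=
  Δ6 k H h = ∑ i, ((((h1 i ⊗ₜ[k] h2 i) ⊗ₜ[k] h3 i) ⊗ₜ[k] h4 i) ⊗ₜ[k] h5 i) ⊗ₜ[k] h6 i

/-- A Drinfeld 2-cocycle `χ : H ⊗ H → k` with convolution inverse `χi`. -/
structure DrinfeldCocycle (χ χi : H →ₗ[k] H →ₗ[k] k) : Prop where
  conv_left : ∀ (h g : H) {n m : ℕ} (h1 h2 : Fin n → H) (g1 g2 : Fin m → H),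
    IsRep2 k H h h1 h2 → IsRep2 k H g g1 g2 →
    ∑ i, ∑ j, χ (h1 i) (g1 j) * χi (h2 i) (g2 j)
      = Coalgebra.counit (R := k) h * Coalgebra.counit (R := k) g
  conv_right : ∀ (h g : H) {n m : ℕ} (h1 h2 : Fin n → H) (g1 g2 : Fin m → H),
    IsRep2 k H h h1 h2 → IsRep2 k H g g1 g2 →
    ∑ i, ∑ j, χi (h1 i) (g1 j) * χ (h2 i) (g2 j)
      = Coalgebra.counit (R := k) h * Coalgebra.counit (R := k) g
  cocycle : ∀ (h g f : H) {n m p : ℕ} (h1 h2 : Fin n → H) (g1 g2 : Fin m → H)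
      (f1 f2 : Fin p → H),
    IsRep2 k H h h1 h2 → IsRep2 k H g g1 g2 → IsRep2 k H f f1 f2 →
    ∑ j, ∑ l, χ (g1 j) (f1 l) * χ h (g2 j * f2 l)
      = ∑ i, ∑ j, χ (h1 i) (g1 j) * χ (h2 i * g2 j) f
  one_cocy : ∀ h : H, χ 1 h = Coalgebra.counit (R := k) h
  cocy_one : ∀ h : H, χ h 1 = Coalgebra.counit (R := k) h

/-- The twisted product `h • g = χ(h₍₁₎,g₍₁₎) h₍₂₎g₍₂₎ χ⁻¹(h₍₃₎,g₍₃₎)` of the Drinfeld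
cotwist `H^χ`, given as a bilinear map `tmul`. -/
def IsTwistedMul (χ χi : H →ₗ[k] H →ₗ[k] k) (tmul : H →ₗ[k] H →ₗ[k] H) : Prop :=
  ∀ (h g : H) {n m : ℕ} (h1 h2 h3 : Fin n → H) (g1 g2 g3 : Fin m → H),
    IsRep3 k H h h1 h2 h3 → IsRep3 k H g g1 g2 g3 →
    tmul h g = ∑ i, ∑ j, (χ (h1 i) (g1 j) * χi (h3 i) (g3 j)) • (h2 i * g2 j)

/-- A coquasitriangular structure `r` on `H`, with convolution inverse `ri`. -/
structure Coquasitriangular (r ri : H →ₗ[k] H →ₗ[k] k) : Prop where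
  conv_left : ∀ (h g : H) {n m : ℕ} (h1 h2 : Fin n → H) (g1 g2 : Fin m → H),
    IsRep2 k H h h1 h2 → IsRep2 k H g g1 g2 →
    ∑ i, ∑ j, r (h1 i) (g1 j) * ri (h2 i) (g2 j)
      = Coalgebra.counit (R := k) h * Coalgebra.counit (R := k) g
  conv_right : ∀ (h g : H) {n m : ℕ} (h1 h2 : Fin n → H) (g1 g2 : Fin m → H),
    IsRep2 k H h h1 h2 → IsRep2 k H g g1 g2 →
    ∑ i, ∑ j, ri (h1 i) (g1 j) * r (h2 i) (g2 j)
      = Coalgebra.counit (R := k) h * Coalgebra.counit (R := k) g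
  braid : ∀ (h g : H) {n m : ℕ} (h1 h2 : Fin n → H) (g1 g2 : Fin m → H),
    IsRep2 k H h h1 h2 → IsRep2 k H g g1 g2 →
    ∑ i, ∑ j, r (h2 i) (g2 j) • (g1 j * h1 i) = ∑ i, ∑ j, r (h1 i) (g1 j) • (h2 i * g2 j)
  mul_right : ∀ (h g f : H) {n : ℕ} (h1 h2 : Fin n → H), IsRep2 k H h h1 h2 →
    r h (g * f) = ∑ i, r (h1 i) g * r (h2 i) f
  mul_left : ∀ (h g f : H) {n : ℕ} (f1 f2 : Fin n → H), IsRep2 k H f f1 f2 →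
    r (h * g) f = ∑ i, r h (f1 i) * r g (f2 i)

variable (B : Type*) [Ring B] [Algebra k B]

/-- `u, ui : H → B` are convolution inverses of each other. -/
def ConvInv (u ui : H →ₗ[k] B) : Prop :=
  ∀ (h : H) {n : ℕ} (h1 h2 : Fin n → H), IsRep2 k H h h1 h2 →
    ∑ i, u (h1 i) * ui (h2 i) = Coalgebra.counit (R := k) h • (1 : B)
    ∧ ∑ i, ui (h1 i) * u (h2 i) = Coalgebra.counit (R := k) h • (1 : B)

/-- A measuring of `H` on `B`:  `h ▷ (ab) = (h₍₁₎ ▷ a)(h₍₂₎ ▷ b)` and `h ▷ 1 = ε(h)1`. -/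
structure Measuring (act : H →ₗ[k] B →ₗ[k] B) : Prop where
  act_mul : ∀ (h : H) (a b : B) {n : ℕ} (h1 h2 : Fin n → H),
    IsRep2 k H h h1 h2 → act h (a * b) = ∑ i, act (h1 i) a * act (h2 i) b
  act_one : ∀ h : H, act h 1 = Coalgebra.counit (R := k) h • (1 : B)

/-- A cocycle datum `(▷, σ)` (with chosen convolution inverse `σi` of `σ`). -/
structure CocycleDatum (act : H →ₗ[k] B →ₗ[k] B) (σ σi : H →ₗ[k] H →ₗ[k] B) : Prop where
  toMeasuring : Measuring k H B act
  conv_left : ∀ (h g : H) {n m : ℕ} (h1 h2 : Fin n → H) (g1 g2 : Fin m → H),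
    IsRep2 k H h h1 h2 → IsRep2 k H g g1 g2 →
    ∑ i, ∑ j, σ (h1 i) (g1 j) * σi (h2 i) (g2 j)
      = (Coalgebra.counit (R := k) h * Coalgebra.counit (R := k) g) • (1 : B)
  conv_right : ∀ (h g : H) {n m : ℕ} (h1 h2 : Fin n → H) (g1 g2 : Fin m → H),
    IsRep2 k H h h1 h2 → IsRep2 k H g g1 g2 →
    ∑ i, ∑ j, σi (h1 i) (g1 j) * σ (h2 i) (g2 j)
      = (Coalgebra.counit (R := k) h * Coalgebra.counit (R := k) g) • (1 : B)
  one_act : ∀ b : B, act 1 b = b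
  act_act : ∀ (h g : H) (b : B) {n m : ℕ} (h1 h2 h3 : Fin n → H) (g1 g2 g3 : Fin m → H),
    IsRep3 k H h h1 h2 h3 → IsRep3 k H g g1 g2 g3 →
    act h (act g b) = ∑ i, ∑ j, σ (h1 i) (g1 j) * act (h2 i * g2 j) b * σi (h3 i) (g3 j)
  sigma_one : ∀ h : H, σ h 1 = Coalgebra.counit (R := k) h • (1 : B)
  one_sigma : ∀ h : H, σ 1 h = Coalgebra.counit (R := k) h • (1 : B)
  cocycle : ∀ (h g f : H) {n m p : ℕ} (h1 h2 : Fin n → H) (g1 g2 : Fin m → H)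
      (f1 f2 : Fin p → H),
    IsRep2 k H h h1 h2 → IsRep2 k H g g1 g2 → IsRep2 k H f f1 f2 →
    ∑ i, ∑ j, ∑ l, act (h1 i) (σ (g1 j) (f1 l)) * σ (h2 i) (g2 j * f2 l)
      = ∑ i, ∑ j, σ (h1 i) (g1 j) * σ (h2 i * g2 j) f

/-- The cocycle cross product multiplication on `P = B ⊗ H`:
`(b#h)(c#g) = b(h₍₁₎▷c)σ(h₍₂₎,g₍₁₎) # h₍₃₎g₍₂₎`, given as a bilinear map `mult`. -/
def IsCrossMul (act : H →ₗ[k] B →ₗ[k] B) (σ : H →ₗ[k] H →ₗ[k] B)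
    (mult : B ⊗[k] H →ₗ[k] B ⊗[k] H →ₗ[k] B ⊗[k] H) : Prop :=
  ∀ (b c : B) (h g : H) {n m : ℕ} (h1 h2 h3 : Fin n → H) (g1 g2 : Fin m → H),
    IsRep3 k H h h1 h2 h3 → IsRep2 k H g g1 g2 →
    mult (b ⊗ₜ[k] h) (c ⊗ₜ[k] g)
      = ∑ i, ∑ j, (b * act (h1 i) c * σ (h2 i) (g1 j)) ⊗ₜ[k] (h3 i * g2 j)

end SweedlerDefs

section HopfDefs

variable (k : Type*) [Field k]
variable (H : Type*) [Ring H] [HopfAlgebra k H]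
variable (B : Type*) [Ring B] [Algebra k B]

/-- The cocycle Hopf algebroid multiplication on `B ⊗ B ⊗ H`:
`(b⊗b'⊗h)(c⊗c'⊗g) = b(h₍₁₎▷c)σ(h₍₂₎,g₍₁₎) ⊗ c'(S(g₍₄₎)▷b')σ(S(g₍₃₎),S(h₍₄₎)) ⊗ h₍₃₎g₍₂₎`,
given as a bilinear map `mult`. -/
def IsAlgebroidMul (act : H →ₗ[k] B →ₗ[k] B) (σ : H →ₗ[k] H →ₗ[k] B)
    (mult : B ⊗[k] (B ⊗[k] H) →ₗ[k] B ⊗[k] (B ⊗[k] H) →ₗ[k] B ⊗[k] (B ⊗[k] H)) : Prop :=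
  ∀ (b b' c c' : B) (h g : H) {n m : ℕ}
    (h1 h2 h3 h4 : Fin n → H) (g1 g2 g3 g4 : Fin m → H),
    IsRep4 k H h h1 h2 h3 h4 → IsRep4 k H g g1 g2 g3 g4 →
    mult (b ⊗ₜ[k] (b' ⊗ₜ[k] h)) (c ⊗ₜ[k] (c' ⊗ₜ[k] g))
      = ∑ i, ∑ j, (b * act (h1 i) c * σ (h2 i) (g1 j)) ⊗ₜ[k]
          ((c' * act (HopfAlgebra.antipode (R := k) (g4 j)) b'
              * σ (HopfAlgebra.antipode (R := k) (g3 j))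
                  (HopfAlgebra.antipode (R := k) (h4 i))) ⊗ₜ[k] (h3 i * g2 j))

end HopfDefs

section MatrixCoefficients

/-! ### Multiplicative matrices -/

variable {k : Type*} [Field k]

section Bialg

variable {H : Type*} [Ring H] [Bialgebra k H]
variable {ι κ μ : Type*} [Fintype ι] [DecidableEq ι] [Fintype κ] [DecidableEq κ]
  [Fintype μ] [DecidableEq μ]

/-- A finite square matrix `c` over `H` is a *multiplicative matrix* (a matrix of coefficients of a
finite-dimensional comodule) if `Δ(cᵢⱼ) = ∑ₗ cᵢₗ ⊗ cₗⱼ` and `ε(cᵢⱼ) = δᵢⱼ`. -/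
structure IsMultMatrix (k : Type*) [Field k] {H : Type*} [Ring H] [Bialgebra k H]
    {ι : Type*} [Fintype ι] [DecidableEq ι] (c : ι → ι → H) : Prop where
  comul_eq : ∀ i j, comul (R := k) (c i j) = ∑ l, c i l ⊗ₜ[k] c l j
  counit_eq : ∀ i j, counit (R := k) (c i j) = if i = j then 1 else 0

/-- Over a field every element of `H` lies in a finite-dimensional right coideal; expanding
the coaction in a basis `w` of it exhibits the element as a combination of matrix coefficients. -/
theorem exists_isMultMatrix (h : H) :
    ∃ (n : ℕ) (c : Fin n → Fin n → H) (a : Fin n → Fin n → k),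
      IsMultMatrix k c ∧ h = ∑ i, ∑ j, a i j • c i j := by
  classical
  let e := Module.Basis.ofVectorSpace k H
  let E := TensorProduct.equivFinsuppOfBasisRight (M := H) e
  let f := E (comul (R := k) h)
  -- `Δ h = ∑ f i ⊗ e i`, and `V` is the span of the left legs `f i`.
  have hf : comul (R := k) h = ∑ i ∈ f.support, f i ⊗ₜ[k] e i := by
    have h1 : E.symm f = comul (R := k) h := E.symm_apply_apply _
    rw [← h1]
    simp [E, TensorProduct.equivFinsuppOfBasisRight_symm_apply, Finsupp.sum]
  let V : Submodule k H := Submodule.span k ((fun i => f i) '' (f.support : Set _))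
  have hfV : ∀ i ∈ f.support, f i ∈ V := fun i hi =>
    Submodule.subset_span ⟨i, hi, rfl⟩
  have : FiniteDimensional k V :=
    FiniteDimensional.span_of_finite k (f.support.finite_toSet.image _)
  have hhV : h ∈ V := by
    have h1 := lTensor_counit_comul (R := k) h
    rw [hf] at h1
    have h2 := congrArg (TensorProduct.rid k H) h1
    simp only [map_sum, LinearMap.lTensor_tmul, TensorProduct.rid_tmul, one_smul] at h2
    rw [← h2]
    exact Submodule.sum_mem _ fun i hi => V.smul_mem _ (hfV i hi)
  have hΔ : ∀ v ∈ V, comul (R := k) v ∈ LinearMap.range (LinearMap.rTensor H V.subtype) := by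
    intro v hv
    refine Submodule.span_induction (p := fun v _ => comul (R := k) v ∈
      LinearMap.range (LinearMap.rTensor H V.subtype)) ?_ ?_ ?_ ?_ hv
    · rintro _ ⟨i, hi, rfl⟩
      have h1 := coassoc_apply (R := k) h
      have h2 := congrArg (fun t => TensorProduct.rid k (H ⊗[k] H)
        (LinearMap.lTensor (H ⊗[k] H) (e.coord i) ((TensorProduct.assoc k H H H).symm t))) h1
      simp only [hf, map_sum, LinearEquiv.symm_apply_apply, LinearMap.rTensor_tmul,
        LinearMap.lTensor_tmul, TensorProduct.rid_tmul, Module.Basis.coord_apply,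
        Module.Basis.repr_self] at h2
      rw [Finset.sum_eq_single i] at h2
      · simp only [Finsupp.single_eq_same, one_smul] at h2
        change comul (R := k) (f i) ∈ _
        rw [h2]
        refine Submodule.sum_mem _ fun l hl => ?_
        obtain ⟨s, hs⟩ := TensorProduct.exists_finset (R := k) (comul (R := k) (e l))
        rw [hs]
        simp only [TensorProduct.tmul_sum, map_sum, TensorProduct.assoc_symm_tmul,
          LinearMap.lTensor_tmul, TensorProduct.rid_tmul]
        refine Submodule.sum_mem _ fun x _ => Submodule.smul_mem _ _ ?_
        exact ⟨(⟨f l, hfV l hl⟩ : V) ⊗ₜ x.1, by simp⟩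
      · intro b _ hb
        simp [hb]
      · intro hi'
        exact absurd hi hi'
    · simp
    · intro x y _ _ hx hy
      rw [map_add]; exact Submodule.add_mem _ hx hy
    · intro a x _ hx
      rw [map_smul]; exact Submodule.smul_mem _ _ hx
  -- `φ` is dual to the basis `w` of `V`, and `c` is the coaction matrix: `Δ(wᵢ) = ∑ₗ wₗ ⊗ cₗᵢ`.
  let w := Module.finBasis k V
  obtain ⟨r, hr⟩ := LinearMap.exists_leftInverse_of_injective V.subtype V.ker_subtype
  let φ : Fin _ → H →ₗ[k] k := fun i => w.coord i ∘ₗ r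
  have hφ : ∀ i j, φ i (w j : H) = if i = j then 1 else 0 := by
    intro i j
    have : r (w j : H) = w j := LinearMap.congr_fun hr (w j)
    simp [φ, this, Finsupp.single_apply, eq_comm]
  let c : Fin _ → Fin _ → H := fun l i =>
    TensorProduct.lid k H (LinearMap.rTensor H (φ l) (comul (R := k) (w i : H)))
  have hw : ∀ i, comul (R := k) (w i : H) = ∑ l, (w l : H) ⊗ₜ[k] c l i := by
    intro i
    obtain ⟨t, ht⟩ := hΔ (w i) (w i).2
    obtain ⟨g, rfl⟩ : ∃ g : Fin _ → H, t = ∑ l, w l ⊗ₜ[k] g l := by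
      refine ⟨fun l => TensorProduct.equivFinsuppOfBasisLeft w t l, ?_⟩
      have := (TensorProduct.equivFinsuppOfBasisLeft (N := H) w).symm_apply_apply t
      rw [TensorProduct.equivFinsuppOfBasisLeft_symm_apply] at this
      rw [← this]
      simp [Finsupp.sum_fintype]
    simp only [map_sum, LinearMap.rTensor_tmul, Submodule.subtype_apply] at ht
    simp only [c, ← ht, map_sum, LinearMap.rTensor_tmul, TensorProduct.lid_tmul, hφ, ite_smul,
      one_smul, zero_smul, Finset.sum_ite_eq, Finset.mem_univ, if_true]
  have hcounit : ∀ i j, counit (R := k) (c i j) = if i = j then 1 else 0 := by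
    intro i j
    have h1 := congrArg (fun t => φ i (TensorProduct.rid k H t))
      (lTensor_counit_comul (R := k) (w j : H))
    simp only [hw, map_sum, LinearMap.lTensor_tmul, TensorProduct.rid_tmul, one_smul, map_smul,
      hφ, smul_eq_mul, mul_ite, mul_one, mul_zero, Finset.sum_ite_eq, Finset.mem_univ,
      if_true] at h1
    exact h1
  have hwc : ∀ i, (w i : H) = ∑ l, counit (R := k) (w l : H) • c l i := by
    intro i
    have h1 := congrArg (TensorProduct.lid k H) (rTensor_counit_comul (R := k) (w i : H))
    rw [hw] at h1
    simp only [map_sum, LinearMap.rTensor_tmul, TensorProduct.lid_tmul, one_smul] at h1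
    exact h1.symm
  refine ⟨_, c, fun i j => w.repr ⟨h, hhV⟩ j * counit (R := k) (w i : H), ⟨?_, hcounit⟩, ?_⟩
  · intro i j
    have h1 := coassoc_apply (R := k) (w j : H)
    have h2 := congrArg (fun t => TensorProduct.lid k (H ⊗[k] H)
        (LinearMap.rTensor (H ⊗[k] H) (φ i) t)) h1
    simp only [hw, map_sum, LinearMap.rTensor_tmul, LinearMap.lTensor_tmul,
      TensorProduct.sum_tmul, TensorProduct.assoc_tmul, TensorProduct.lid_tmul, hφ, ite_smul,
      one_smul, zero_smul, Finset.sum_ite_eq, Finset.mem_univ, if_true] at h2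
    exact h2.symm
  · have h1 := congrArg (V.subtype) (w.sum_repr ⟨h, hhV⟩)
    simp only [map_sum, map_smul, Submodule.subtype_apply] at h1
    rw [Finset.sum_comm]
    refine h1.symm.trans ?_
    refine Finset.sum_congr rfl fun i _ => ?_
    rw [hwc i, Finset.smul_sum]
    simp [mul_smul]

namespace IsMultMatrix

variable {c : ι → ι → H} {d : κ → κ → H} {e : μ → μ → H}

/-- Linear maps agreeing on all coefficients of multiplicative matrices are equal. -/
theorem linearMap_ext {M : Type*} [AddCommGroup M] [Module k M] {F G : H →ₗ[k] M}
    (hFG : ∀ (n : ℕ) (c : Fin n → Fin n → H), IsMultMatrix k c →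
      ∀ i j, F (c i j) = G (c i j)) : F = G := by
  ext h
  obtain ⟨n, c, a, hc, rfl⟩ := exists_isMultMatrix (k := k) h
  simp [hFG n c hc]

theorem mul (hc : IsMultMatrix k c) (hd : IsMultMatrix k d) :
    IsMultMatrix k (fun x y : ι × κ => c x.1 y.1 * d x.2 y.2) where
  comul_eq x y := by
    simp only [Bialgebra.comul_mul, hc.comul_eq, hd.comul_eq, Finset.sum_mul_sum,
      Algebra.TensorProduct.tmul_mul_tmul, Fintype.sum_prod_type]
  counit_eq x y := by
    simp only [Bialgebra.counit_mul, hc.counit_eq, hd.counit_eq, Prod.ext_iff, ite_and]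
    split_ifs <;> simp

theorem isRep2 (hc : IsMultMatrix k c) (i j : ι) :
    IsRep2 k H (c i j) (fun t => c i ((Fintype.equivFin ι).symm t))
      (fun t => c ((Fintype.equivFin ι).symm t) j) := by
  rw [IsRep2, hc.comul_eq, ← Equiv.sum_comp (Fintype.equivFin ι).symm]

theorem isRep3 (hc : IsMultMatrix k c) (i j : ι) :
    IsRep3 k H (c i j) (fun t => c i ((Fintype.equivFin (ι × ι)).symm t).1)
      (fun t => c ((Fintype.equivFin (ι × ι)).symm t).1 ((Fintype.equivFin (ι × ι)).symm t).2)
      (fun t => c ((Fintype.equivFin (ι × ι)).symm t).2 j) := by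
  rw [IsRep3, Δ3]
  rw [Equiv.sum_comp (Fintype.equivFin (ι × ι)).symm
    (fun t => (c i t.1 ⊗ₜ[k] c t.1 t.2) ⊗ₜ[k] c t.2 j)]
  simp only [LinearMap.comp_apply, hc.comul_eq, map_sum, LinearMap.rTensor_tmul,
    TensorProduct.sum_tmul, Fintype.sum_prod_type]
  rw [Finset.sum_comm]

theorem delta3 (hc : IsMultMatrix k c) (i j : ι) :
    Δ3 k H (c i j) = ∑ r, ∑ p, (c i p ⊗ₜ[k] c p r) ⊗ₜ[k] c r j := by
  simp [Δ3, hc.comul_eq, TensorProduct.sum_tmul]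

theorem delta4 (hc : IsMultMatrix k c) (i j : ι) :
    Δ4 k H (c i j) = ∑ r, ∑ q, ∑ p, ((c i p ⊗ₜ[k] c p q) ⊗ₜ[k] c q r) ⊗ₜ[k] c r j := by
  simp [Δ4, hc.comul_eq, hc.delta3, TensorProduct.sum_tmul]

end IsMultMatrix

/-! ### Reordering of iterated finite sums -/

section SumComm

variable {α₁ α₂ α₃ α₄ α₅ α₆ α₇ M : Type*} [Fintype α₁] [Fintype α₂] [Fintype α₃] [Fintype α₄]
  [Fintype α₅] [Fintype α₆] [Fintype α₇] [AddCommMonoid M]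

theorem sum_comm33 (F : α₁ → α₂ → α₃ → α₄ → α₅ → α₆ → M) :
    ∑ a, ∑ b, ∑ c, ∑ x, ∑ y, ∑ z, F a b c x y z = ∑ x, ∑ y, ∑ z, ∑ a, ∑ b, ∑ c, F a b c x y z := by
  have := Finset.sum_comm (s := (Finset.univ : Finset (α₁ × α₂ × α₃)))
    (t := (Finset.univ : Finset (α₄ × α₅ × α₆)))
    (f := fun u v => F u.1 u.2.1 u.2.2 v.1 v.2.1 v.2.2)
  simpa only [Fintype.sum_prod_type] using this

theorem sum_comm25 (F : α₁ → α₂ → α₃ → α₄ → α₅ → α₆ → α₇ → M) :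
    ∑ a, ∑ b, ∑ c, ∑ x, ∑ y, ∑ z, ∑ w, F a b c x y z w
      = ∑ c, ∑ x, ∑ y, ∑ z, ∑ w, ∑ a, ∑ b, F a b c x y z w := by
  have := Finset.sum_comm (s := (Finset.univ : Finset (α₁ × α₂)))
    (t := (Finset.univ : Finset (α₃ × α₄ × α₅ × α₆ × α₇)))
    (f := fun u v => F u.1 u.2 v.1 v.2.1 v.2.2.1 v.2.2.2.1 v.2.2.2.2)
  simpa only [Fintype.sum_prod_type] using this

theorem sum_comm13 (F : α₁ → α₂ → α₃ → α₄ → M) :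
    ∑ b, ∑ c, ∑ x, ∑ a, F a b c x = ∑ a, ∑ b, ∑ c, ∑ x, F a b c x := by
  have := Finset.sum_comm (s := (Finset.univ : Finset α₁))
    (t := (Finset.univ : Finset (α₂ × α₃ × α₄)))
    (f := fun u v => F u v.1 v.2.1 v.2.2)
  simpa only [Fintype.sum_prod_type] using this.symm

theorem sum_comm14 (F : α₁ → α₂ → α₃ → α₄ → α₅ → M) :
    ∑ a, ∑ b, ∑ c, ∑ x, ∑ y, F a b c x y = ∑ b, ∑ c, ∑ x, ∑ y, ∑ a, F a b c x y := by
  have := Finset.sum_comm (s := (Finset.univ : Finset α₁))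
    (t := (Finset.univ : Finset (α₂ × α₃ × α₄ × α₅)))
    (f := fun u v => F u v.1 v.2.1 v.2.2.1 v.2.2.2)
  simpa only [Fintype.sum_prod_type] using this

end SumComm

/-! ### The cocycle datum and the cross product on coefficients -/

section Cocycle

variable {B : Type*} [Ring B] [Algebra k B]
variable {c : ι → ι → H} {d : κ → κ → H} {e : μ → μ → H}
variable {act : H →ₗ[k] B →ₗ[k] B} {σ σi : H →ₗ[k] H →ₗ[k] B}

theorem act_mul_coeff (hcd : CocycleDatum k H B act σ σi) (hc : IsMultMatrix k c) (i j : ι)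
    (a b : B) : act (c i j) (a * b) = ∑ p, act (c i p) a * act (c p j) b := by
  rw [hcd.toMeasuring.act_mul _ a b _ _ (hc.isRep2 i j)]
  exact Equiv.sum_comp (Fintype.equivFin ι).symm (fun p => act (c i p) a * act (c p j) b)

theorem conv_right_coeff (hcd : CocycleDatum k H B act σ σi) (hc : IsMultMatrix k c)
    (hd : IsMultMatrix k d) (i j : ι) (x y : κ) :
    ∑ p, ∑ q, σi (c i p) (d x q) * σ (c p j) (d q y)
      = if i = j then (if x = y then 1 else 0) else 0 := by
  have := hcd.conv_right _ _ _ _ _ _ (hc.isRep2 i j) (hd.isRep2 x y)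
  refine (Fintype.sum_equiv (Fintype.equivFin ι) _ _ fun p =>
    Fintype.sum_equiv (Fintype.equivFin κ) _ _ fun q => ?_).trans (this.trans ?_)
  · simp only [Equiv.symm_apply_apply]
  · rw [hc.counit_eq, hd.counit_eq]
    split_ifs <;> simp

theorem cocycle_coeff (hcd : CocycleDatum k H B act σ σi) (hc : IsMultMatrix k c)
    (hd : IsMultMatrix k d) (he : IsMultMatrix k e) (i j : ι) (x y : κ) (m n : μ) :
    ∑ p, ∑ q, ∑ r, act (c i p) (σ (d x q) (e m r)) * σ (c p j) (d q y * e r n)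
      = ∑ p, ∑ q, σ (c i p) (d x q) * σ (c p j * d q y) (e m n) := by
  have := hcd.cocycle _ _ _ _ _ _ _ _ _ (hc.isRep2 i j) (hd.isRep2 x y) (he.isRep2 m n)
  refine (Fintype.sum_equiv (Fintype.equivFin ι) _ _ fun p =>
    Fintype.sum_equiv (Fintype.equivFin κ) _ _ fun q =>
    Fintype.sum_equiv (Fintype.equivFin μ) _ _ fun r => ?_).trans (this.trans
    (Fintype.sum_equiv (Fintype.equivFin ι).symm _ _ fun p =>
    Fintype.sum_equiv (Fintype.equivFin κ).symm _ _ fun q => rfl))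
  simp only [Equiv.symm_apply_apply]

/-- `h ▷ σ⁻¹` is a convolution left inverse of `h ▷ σ`, so the cocycle identity can be solved as
`σ(h, gf) = (h₍₁₎ ▷ σ⁻¹(g₍₁₎, f₍₁₎)) σ(h₍₂₎, g₍₂₎) σ(h₍₃₎g₍₃₎, f₍₂₎)`. On coefficients,
convolution on `H ⊗ H ⊗ H` is multiplication of matrices indexed by `ι × κ × μ`. -/
theorem sigma_mul_coeff (hcd : CocycleDatum k H B act σ σi) (hc : IsMultMatrix k c)
    (hd : IsMultMatrix k d) (he : IsMultMatrix k e) (i j : ι) (x y : κ) (m n : μ) :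
    σ (c i j) (d x y * e m n)
      = ∑ p, ∑ q, ∑ r, act (c i p) (σi (d x q) (e m r)) *
          ∑ p', ∑ q', σ (c p p') (d q q') * σ (c p' j * d q' y) (e r n) := by
  let A : Matrix (ι × κ × μ) (ι × κ × μ) B := Matrix.of fun u v =>
    act (c u.1 v.1) (σ (d u.2.1 v.2.1) (e u.2.2 v.2.2))
  let A' : Matrix (ι × κ × μ) (ι × κ × μ) B := Matrix.of fun u v =>
    act (c u.1 v.1) (σi (d u.2.1 v.2.1) (e u.2.2 v.2.2))
  let R : Matrix (ι × κ × μ) (ι × κ × μ) B := Matrix.of fun u v =>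
    σ (c u.1 v.1) (d u.2.1 v.2.1 * e u.2.2 v.2.2)
  let T : Matrix (ι × κ × μ) (ι × κ × μ) B := Matrix.of fun u v =>
    ∑ p, ∑ q, σ (c u.1 p) (d u.2.1 q) * σ (c p v.1 * d q v.2.1) (e u.2.2 v.2.2)
  have hAR : A * R = T := by
    ext u v
    simp only [Matrix.mul_apply, A, R, T, Matrix.of_apply, Fintype.sum_prod_type]
    exact cocycle_coeff hcd hc hd he _ _ _ _ _ _
  have hA : A' * A = 1 := by
    ext ⟨i, x, m⟩ ⟨j, y, n⟩
    simp only [Matrix.mul_apply, A, A', Matrix.of_apply, Fintype.sum_prod_type]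
    have h1 : ∀ q r, ∑ p, act (c i p) (σi (d x q) (e m r)) * act (c p j) (σ (d q y) (e r n))
        = act (c i j) (σi (d x q) (e m r) * σ (d q y) (e r n)) := fun q r =>
      (act_mul_coeff hcd hc i j _ _).symm
    rw [Finset.sum_comm]
    simp only [Finset.sum_comm (s := (Finset.univ : Finset ι)), h1, ← map_sum,
      conv_right_coeff hcd hd he, Matrix.one_apply, Prod.ext_iff]
    by_cases hxy : x = y <;> by_cases hmn : m = n <;>
      simp [hxy, hmn, hcd.toMeasuring.act_one, hc.counit_eq]
  have hR : R = A' * T := by rw [← hAR, ← Matrix.mul_assoc, hA, Matrix.one_mul]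
  have := congrFun (congrFun hR (i, x, m)) (j, y, n)
  simpa only [Matrix.mul_apply, A', R, T, Matrix.of_apply, Fintype.sum_prod_type] using this

variable {mult : B ⊗[k] H →ₗ[k] B ⊗[k] H →ₗ[k] B ⊗[k] H}

theorem mult_coeff (hmult : IsCrossMul k H B act σ mult) (hc : IsMultMatrix k c)
    (hd : IsMultMatrix k d) (i j : ι) (x y : κ) (a b : B) :
    mult (a ⊗ₜ c i j) (b ⊗ₜ d x y) = ∑ p, ∑ q, ∑ r,
      (a * act (c i p) b * σ (c p q) (d x r)) ⊗ₜ[k] (c q j * d r y) := by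
  rw [hmult a b _ _ _ _ _ _ _ (hc.isRep3 i j) (hd.isRep2 x y)]
  refine (Fintype.sum_equiv (Fintype.equivFin (ι × ι)).symm _ (fun t => ∑ r,
    (a * act (c i t.1) b * σ (c t.1 t.2) (d x r)) ⊗ₜ[k] (c t.2 j * d r y)) fun t =>
    Fintype.sum_equiv (Fintype.equivFin κ).symm _ _ fun r => rfl).trans ?_
  rw [Fintype.sum_prod_type]

theorem mult_one_coeff (hcd : CocycleDatum k H B act σ σi)
    (hmult : IsCrossMul k H B act σ mult) (hc : IsMultMatrix k c)
    (hd : IsMultMatrix k d) (i j : ι) (x y : κ) (a : B) :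
    mult (a ⊗ₜ c i j) (1 ⊗ₜ d x y) = ∑ q, ∑ r,
      (a * σ (c i q) (d x r)) ⊗ₜ[k] (c q j * d r y) := by
  rw [mult_coeff hmult hc hd, Finset.sum_eq_single i]
  · simp [hcd.toMeasuring.act_one, hc.counit_eq]
  · intro p _ hp
    simp [hcd.toMeasuring.act_one, hc.counit_eq, hp.symm]
  · simp

/-- Associativity of the cross product when the third factor is `1 # f`, on coefficients. -/
theorem mult_assoc_coeff (hcd : CocycleDatum k H B act σ σi)
    (hmult : IsCrossMul k H B act σ mult) (hc : IsMultMatrix k c)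
    (hd : IsMultMatrix k d) (he : IsMultMatrix k e) (i j : ι) (x y : κ) (m n : μ) (a b : B) :
    mult (mult (a ⊗ₜ c i j) (b ⊗ₜ d x y)) (1 ⊗ₜ e m n)
      = mult (a ⊗ₜ c i j) (mult (b ⊗ₜ d x y) (1 ⊗ₜ e m n)) := by
  have hl : ∀ (q : ι) (r : κ) (z : B), mult (z ⊗ₜ (c q j * d r y)) (1 ⊗ₜ e m n)
      = ∑ q', ∑ r', ∑ s, (z * σ (c q q' * d r r') (e m s)) ⊗ₜ[k] (c q' j * d r' y * e s n) := by
    intro q r z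
    have := mult_one_coeff hcd hmult (hc.mul hd) he (q, r) (j, y) m n z
    simpa only [Fintype.sum_prod_type] using this
  have hr : ∀ (r : κ) (s : μ) (z : B), mult (a ⊗ₜ c i j) (z ⊗ₜ (d r y * e s n))
      = ∑ p, ∑ q, ∑ r', ∑ s', (a * act (c i p) z * σ (c p q) (d r r' * e s s')) ⊗ₜ[k]
          (c q j * (d r' y * e s' n)) := by
    intro r s z
    have := mult_coeff hmult hc (hd.mul he) i j (r, s) (y, n) a z
    simpa only [Fintype.sum_prod_type] using this
  have h1 : mult (mult (a ⊗ₜ c i j) (b ⊗ₜ d x y)) (1 ⊗ₜ e m n)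
      = ∑ q', ∑ r', ∑ s, (∑ p, a * act (c i p) b *
          ∑ q, ∑ r, σ (c p q) (d x r) * σ (c q q' * d r r') (e m s)) ⊗ₜ[k]
          (c q' j * d r' y * e s n) := by
    rw [mult_coeff hmult hc hd]
    simp only [map_sum, LinearMap.sum_apply, hl, TensorProduct.sum_tmul, Finset.mul_sum,
      ← mul_assoc]
    exact sum_comm33 _
  have h2 : mult (a ⊗ₜ c i j) (mult (b ⊗ₜ d x y) (1 ⊗ₜ e m n))
      = ∑ q', ∑ r', ∑ s, (∑ p, a * act (c i p) b *
          ∑ q, ∑ r, ∑ t, act (c p q) (σ (d x r) (e m t)) * σ (c q q') (d r r' * e t s)) ⊗ₜ[k]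
          (c q' j * d r' y * e s n) := by
    rw [mult_one_coeff hcd hmult hd he]
    simp only [map_sum, hr, act_mul_coeff hcd hc, TensorProduct.sum_tmul, Finset.mul_sum,
      Finset.sum_mul, ← mul_assoc]
    rw [sum_comm25]
    exact sum_comm14 _
  rw [h1, h2]
  simp only [cocycle_coeff hcd hc hd he]

theorem mult_assoc_one (hcd : CocycleDatum k H B act σ σi)
    (hmult : IsCrossMul k H B act σ mult) (x y : B ⊗[k] H) (f : H) :
    mult (mult x y) (1 ⊗ₜ f) = mult x (mult y (1 ⊗ₜ f)) := by
  induction x with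
  | zero => simp
  | add x x' hx hx' => simp only [map_add, LinearMap.add_apply, hx, hx']
  | tmul a g =>
    induction y with
    | zero => simp
    | add y y' hy hy' => simp only [map_add, LinearMap.add_apply, hy, hy']
    | tmul b h =>
      obtain ⟨_, c, u, hc, rfl⟩ := exists_isMultMatrix (k := k) g
      obtain ⟨_, d, v, hd, rfl⟩ := exists_isMultMatrix (k := k) h
      obtain ⟨_, e, w, he, rfl⟩ := exists_isMultMatrix (k := k) f
      simp only [TensorProduct.tmul_sum, TensorProduct.tmul_smul, map_sum, map_smul,
        LinearMap.sum_apply, LinearMap.smul_apply, mult_assoc_coeff hcd hmult hc hd he]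

theorem mult_one_one (hcd : CocycleDatum k H B act σ σi)
    (hmult : IsCrossMul k H B act σ mult) (a : B) (g : H) :
    mult (a ⊗ₜ g) (1 ⊗ₜ 1) = a ⊗ₜ g := by
  obtain ⟨_, c, u, hc, rfl⟩ := exists_isMultMatrix (k := k) g
  have h1 : IsMultMatrix k (fun _ _ : Unit => (1 : H)) :=
    ⟨fun _ _ => by simp [Algebra.TensorProduct.one_def], fun _ _ => by simp⟩
  have h2 : ∀ i j, mult (a ⊗ₜ c i j) (1 ⊗ₜ 1) = a ⊗ₜ c i j := by
    intro i j
    rw [mult_one_coeff hcd hmult hc h1 i j () (), Finset.sum_eq_single i]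
    · simp [hcd.sigma_one, hc.counit_eq]
    · intro q _ hq
      simp [hcd.sigma_one, hc.counit_eq, hq.symm]
    · simp
  simp only [TensorProduct.tmul_sum, TensorProduct.tmul_smul, map_sum, map_smul,
    LinearMap.sum_apply, LinearMap.smul_apply, h2]

end Cocycle

end Bialg

/-! ### The antipode and the translation map -/

section Hopf

variable {H : Type*} [Ring H] [HopfAlgebra k H]
variable {ι : Type*} [Fintype ι] [DecidableEq ι]

local notation "𝑺" => HopfAlgebra.antipode (R := k)

namespace IsMultMatrix

variable {c : ι → ι → H}

theorem antipode_mul_coeff (hc : IsMultMatrix k c) (i j : ι) :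
    ∑ l, 𝑺 (c i l) * c l j = if i = j then 1 else 0 := by
  have := HopfAlgebra.mul_antipode_rTensor_comul_apply (R := k) (c i j)
  rw [hc.comul_eq, hc.counit_eq] at this
  simpa [apply_ite] using this

theorem mul_antipode_coeff (hc : IsMultMatrix k c) (i j : ι) :
    ∑ l, c i l * 𝑺 (c l j) = if i = j then 1 else 0 := by
  have := HopfAlgebra.mul_antipode_lTensor_comul_apply (R := k) (c i j)
  rw [hc.comul_eq, hc.counit_eq] at this
  simpa [apply_ite] using this

/-- The antipode reverses the coproduct: the transpose of `S(c)` is again multiplicative.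
Indeed `S(c)` is the inverse matrix of `c`, so `Δ(S(c))` is the inverse of
`Δ(c) = (c ⊗ 1)(1 ⊗ c)`, which is `(1 ⊗ S(c))(S(c) ⊗ 1)`. -/
theorem antipode_transpose (hc : IsMultMatrix k c) :
    IsMultMatrix k (fun i j => 𝑺 (c j i)) where
  comul_eq i j := by
    let X : Matrix ι ι (H ⊗[k] H) := Matrix.of fun i j => comul (R := k) (c i j)
    let Y : Matrix ι ι (H ⊗[k] H) := Matrix.of fun i j => comul (R := k) (𝑺 (c i j))
    let Z : Matrix ι ι (H ⊗[k] H) := Matrix.of fun i j => ∑ l, 𝑺 (c l j) ⊗ₜ[k] 𝑺 (c i l)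
    have hYX : Y * X = 1 := by
      ext i j
      simp only [Matrix.mul_apply, X, Y, Matrix.of_apply, ← Bialgebra.comul_mul, ← map_sum,
        hc.antipode_mul_coeff, Matrix.one_apply]
      split_ifs <;> simp
    have hXZ : X * Z = 1 := by
      let C₁ : Matrix ι ι (H ⊗[k] H) := Matrix.of fun i j => c i j ⊗ₜ[k] 1
      let C₂ : Matrix ι ι (H ⊗[k] H) := Matrix.of fun i j => 1 ⊗ₜ[k] c i j
      let S₁ : Matrix ι ι (H ⊗[k] H) := Matrix.of fun i j => 𝑺 (c i j) ⊗ₜ[k] 1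
      let S₂ : Matrix ι ι (H ⊗[k] H) := Matrix.of fun i j => 1 ⊗ₜ[k] 𝑺 (c i j)
      have hX : X = C₁ * C₂ := by
        ext i j
        simp [X, C₁, C₂, Matrix.mul_apply, hc.comul_eq]
      have hZ : Z = S₂ * S₁ := by
        ext i j
        simp [Z, S₁, S₂, Matrix.mul_apply]
      have h1 : C₁ * S₁ = 1 := by
        ext i j
        simp only [C₁, S₁, Matrix.mul_apply, Matrix.of_apply, Algebra.TensorProduct.tmul_mul_tmul,
          mul_one, ← TensorProduct.sum_tmul, hc.mul_antipode_coeff, Matrix.one_apply]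
        split_ifs <;> simp [Algebra.TensorProduct.one_def]
      have h2 : C₂ * S₂ = 1 := by
        ext i j
        simp only [C₂, S₂, Matrix.mul_apply, Matrix.of_apply, Algebra.TensorProduct.tmul_mul_tmul,
          mul_one, ← TensorProduct.tmul_sum, hc.mul_antipode_coeff, Matrix.one_apply]
        split_ifs <;> simp [Algebra.TensorProduct.one_def]
      rw [hX, hZ, Matrix.mul_assoc, ← Matrix.mul_assoc C₂, h2, Matrix.one_mul, h1]
    have hYZ : Y = Z := by
      rw [← Matrix.mul_one Y, ← hXZ, ← Matrix.mul_assoc, hYX, Matrix.one_mul]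
    exact congrFun (congrFun hYZ j) i
  counit_eq i j := by
    simp [hc.counit_eq, eq_comm]

end IsMultMatrix

variable {B : Type*} [Ring B] [Algebra k B]
variable {c : ι → ι → H}
variable {act : H →ₗ[k] B →ₗ[k] B} {σ σi : H →ₗ[k] H →ₗ[k] B}
variable {mult : B ⊗[k] H →ₗ[k] B ⊗[k] H →ₗ[k] B ⊗[k] H}

/-- The linear map `(x ⊗ y) ⊗ z ↦ σ⁻¹(S(y), z) # S(x)`; composed with the threefold coproduct
it gives the first leg of the translation map. -/
def translationLeg (σi : H →ₗ[k] H →ₗ[k] B) : (H ⊗[k] H) ⊗[k] H →ₗ[k] B ⊗[k] H :=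
  TensorProduct.map (TensorProduct.lift (σi ∘ₗ 𝑺)) 𝑺 ∘ₗ
    (TensorProduct.comm k H (H ⊗[k] H)).toLinearMap ∘ₗ (TensorProduct.assoc k H H H).toLinearMap

@[simp]
theorem translationLeg_tmul (σi : H →ₗ[k] H →ₗ[k] B) (x y z : H) :
    translationLeg σi ((x ⊗ₜ y) ⊗ₜ z) = σi (𝑺 y) z ⊗ₜ 𝑺 x := by
  simp [translationLeg]

theorem translationLeg_coeff (hc : IsMultMatrix k c) (i j : ι) :
    translationLeg σi (Δ3 k H (c i j)) = ∑ b, ∑ a, σi (𝑺 (c a b)) (c b j) ⊗ₜ 𝑺 (c i a) := by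
  simp [hc.delta3]

/-- The first leg `t` of the translation map is a left convolution inverse of `h ↦ 1 # h`. -/
theorem translation_mult_one (hcd : CocycleDatum k H B act σ σi)
    (hmult : IsCrossMul k H B act σ mult) (hc : IsMultMatrix k c) (i j : ι) :
    ∑ l, mult (translationLeg σi (Δ3 k H (c i l))) (1 ⊗ₜ c l j)
      = if i = j then 1 ⊗ₜ 1 else 0 := by
  have hd := hc.antipode_transpose
  have h1 : ∀ (a l : ι) (z : B), mult (z ⊗ₜ 𝑺 (c i a)) (1 ⊗ₜ c l j)
      = ∑ x, ∑ y, (z * σ (𝑺 (c x a)) (c l y)) ⊗ₜ[k] (𝑺 (c i x) * c y j) := fun a l z =>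
    mult_one_coeff hcd hmult hd hc a i l j z
  have h2 : ∀ b x y, ∑ a, ∑ l, σi (𝑺 (c a b)) (c b l) * σ (𝑺 (c x a)) (c l y)
      = if b = x then (if b = y then 1 else 0) else 0 := fun b x y =>
    conv_right_coeff hcd hd hc b x b y
  calc ∑ l, mult (translationLeg σi (Δ3 k H (c i l))) (1 ⊗ₜ c l j)
      = ∑ l, ∑ b, ∑ a, ∑ x, ∑ y, (σi (𝑺 (c a b)) (c b l) * σ (𝑺 (c x a)) (c l y)) ⊗ₜ[k]
          (𝑺 (c i x) * c y j) := by
        simp only [translationLeg_coeff hc, map_sum, LinearMap.sum_apply, h1]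
    _ = ∑ b, ∑ x, ∑ y, (∑ a, ∑ l, σi (𝑺 (c a b)) (c b l) * σ (𝑺 (c x a)) (c l y)) ⊗ₜ[k]
          (𝑺 (c i x) * c y j) := by
        simp only [TensorProduct.sum_tmul]
        rw [sum_comm14]
        refine Finset.sum_congr rfl fun b _ => ?_
        rw [Finset.sum_comm]
        exact Finset.sum_congr rfl fun x _ => Finset.sum_comm
    _ = ∑ b, 1 ⊗ₜ[k] (𝑺 (c i b) * c b j) := by
        simp only [h2, TensorProduct.ite_tmul]
        simp
    _ = _ := by
        rw [← TensorProduct.tmul_sum, hc.antipode_mul_coeff]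
        split_ifs <;> simp

/-- `(h₍₁₎ ▷ σ⁻¹(S(h₍₄₎), h₍₅₎)) σ(h₍₂₎, S(h₍₃₎)) = ε(h)`: contract
`sigma_mul_coeff` along `h₍₁₎ ⊗ S(h₍₂₎) ⊗ h₍₃₎`. -/
theorem act_sigmaInv_mul_sigma (hcd : CocycleDatum k H B act σ σi) (hc : IsMultMatrix k c)
    (i j : ι) :
    ∑ b, ∑ p, ∑ y, act (c i p) (σi (𝑺 (c y b)) (c b j)) * ∑ q, σ (c p q) (𝑺 (c q y))
      = if i = j then 1 else 0 := by
  have hd := hc.antipode_transpose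
  have h1 : ∀ a b, σ (c i a) (𝑺 (c a b) * c b j)
      = ∑ p, ∑ y, ∑ z, act (c i p) (σi (𝑺 (c y b)) (c b z)) *
          ∑ q, ∑ x, σ (c p q) (𝑺 (c x y)) * σ (c q a * 𝑺 (c a x)) (c z j) := fun a b =>
    sigma_mul_coeff hcd hc hd hc i a b a b j
  have h2 : ∑ a, ∑ b, σ (c i a) (𝑺 (c a b) * c b j) = if i = j then 1 else 0 := by
    simp only [← map_sum, hc.antipode_mul_coeff]
    rw [Finset.sum_eq_single j]
    · simp [hcd.sigma_one, hc.counit_eq]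
    · intro a _ ha
      simp [ha]
    · simp
  have h3 : ∀ p y z, ∑ q, ∑ x, ∑ a, σ (c p q) (𝑺 (c x y)) * σ (c q a * 𝑺 (c a x)) (c z j)
      = if z = j then ∑ q, σ (c p q) (𝑺 (c q y)) else 0 := by
    intro p y z
    have : ∀ q x, ∑ a, σ (c q a * 𝑺 (c a x)) (c z j)
        = if q = x then (if z = j then 1 else 0) else 0 := by
      intro q x
      rw [← LinearMap.sum_apply, ← map_sum, hc.mul_antipode_coeff]
      split_ifs <;> simp [hcd.one_sigma, hc.counit_eq, *]
    simp only [← Finset.mul_sum, this]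
    split_ifs <;> simp
  rw [← h2]
  refine Eq.trans ?_ Finset.sum_comm
  refine Finset.sum_congr rfl fun b _ => ?_
  simp only [h1]
  refine Eq.trans ?_ Finset.sum_comm
  refine Finset.sum_congr rfl fun p _ => ?_
  refine Eq.trans ?_ Finset.sum_comm
  refine Finset.sum_congr rfl fun y _ => ?_
  refine Eq.trans ?_ Finset.sum_comm
  have h4 : ∀ z, ∑ a, act (c i p) (σi (𝑺 (c y b)) (c b z)) *
      ∑ q, ∑ x, σ (c p q) (𝑺 (c x y)) * σ (c q a * 𝑺 (c a x)) (c z j)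
      = act (c i p) (σi (𝑺 (c y b)) (c b z)) *
        if z = j then ∑ q, σ (c p q) (𝑺 (c q y)) else 0 := by
    intro z
    rw [← h3, ← Finset.mul_sum, Finset.sum_comm]
    congr 1
    exact Finset.sum_congr rfl fun q _ => Finset.sum_comm
  simp only [h4]
  simp

/-- `(b # h₍₁₎) · t(h₍₂₎) = ε(h) (b # 1)` for the first leg `t` of the translation map; for `b = 1`
this says that `t` is also a right convolution inverse of `h ↦ 1 # h`. -/
theorem mult_translation (hcd : CocycleDatum k H B act σ σi)
    (hmult : IsCrossMul k H B act σ mult) (hc : IsMultMatrix k c) (b : B) (i j : ι) :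
    ∑ r, ∑ q, ∑ p, mult (b ⊗ₜ c i p) (σi (𝑺 (c q r)) (c r j) ⊗ₜ 𝑺 (c p q))
      = if i = j then b ⊗ₜ 1 else 0 := by
  have hd := hc.antipode_transpose
  have h1 : ∀ (p q : ι) (z : B), mult (b ⊗ₜ c i p) (z ⊗ₜ 𝑺 (c p q))
      = ∑ u, ∑ v, ∑ w, (b * act (c i u) z * σ (c u v) (𝑺 (c w q))) ⊗ₜ[k]
          (c v p * 𝑺 (c p w)) := fun p q z =>
    mult_coeff hmult hc hd i p q p b z
  have h2 : ∀ (q : ι) (z : B), ∑ p, mult (b ⊗ₜ c i p) (z ⊗ₜ 𝑺 (c p q))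
      = (b * ∑ u, act (c i u) z * ∑ v, σ (c u v) (𝑺 (c v q))) ⊗ₜ 1 := by
    intro q z
    simp only [h1]
    rw [← sum_comm13]
    simp only [← TensorProduct.tmul_sum, hc.mul_antipode_coeff, TensorProduct.tmul_ite,
      Finset.sum_ite_eq, Finset.mem_univ, if_true, TensorProduct.sum_tmul, Finset.mul_sum, ← mul_assoc]
  simp only [h2, ← TensorProduct.sum_tmul, ← Finset.mul_sum]
  have h3 := act_sigmaInv_mul_sigma hcd hc i j
  have h4 : ∑ r, ∑ q, ∑ u, act (c i u) (σi (𝑺 (c q r)) (c r j)) * ∑ v, σ (c u v) (𝑺 (c v q))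
      = if i = j then 1 else 0 := by
    rw [← h3]
    exact Finset.sum_congr rfl fun r _ => Finset.sum_comm
  rw [h4]
  split_ifs <;> simp

end Hopf

end MatrixCoefficients

section Statements

variable {k : Type*} [Field k]
variable {H : Type*} [Ring H] [HopfAlgebra k H]
variable {B : Type*} [Ring B] [Algebra k B]

local notation "𝑺" => HopfAlgebra.antipode (R := k)

/-- Lemma 4.1 (key identities): the cocycle cross product `P = B #_σ H` is a Hopf–Galois
extension, with inverse of the canonical map determined by the translation map
`τ(h) = σ⁻¹(S(h₍₂₎),h₍₃₎)#S(h₍₁₎) ⊗ 1#h₍₄₎`. -/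
theorem statement17 (act : H →ₗ[k] B →ₗ[k] B) (σ σi : H →ₗ[k] H →ₗ[k] B)
    (hcd : CocycleDatum k H B act σ σi)
    (mult : B ⊗[k] H →ₗ[k] B ⊗[k] H →ₗ[k] B ⊗[k] H)
    (hmult : IsCrossMul k H B act σ mult)
    (Can : (B ⊗[k] H) ⊗[k] (B ⊗[k] H) →ₗ[k] (B ⊗[k] H) ⊗[k] H)
    (hCan : ∀ (p : B ⊗[k] H) (c : B) (f : H) {n : ℕ} (f1 f2 : Fin n → H),
      IsRep2 k H f f1 f2 →
      Can (p ⊗ₜ[k] (c ⊗ₜ[k] f)) = ∑ i, (mult p (c ⊗ₜ[k] f1 i)) ⊗ₜ[k] f2 i) :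
    -- (i)  Can((b#g)·(σ⁻¹(S(h₍₂₎),h₍₃₎)#S(h₍₁₎)) ⊗ (1#h₍₄₎)) = (b#g) ⊗ h
    (∀ (b : B) (g h : H) {n : ℕ} (h1 h2 h3 h4 : Fin n → H), IsRep4 k H h h1 h2 h3 h4 →
      Can (∑ i, (mult (b ⊗ₜ[k] g) ((σi (𝑺 (h2 i)) (h3 i)) ⊗ₜ[k] 𝑺 (h1 i)))
            ⊗ₜ[k] ((1 : B) ⊗ₜ[k] h4 i))
        = (b ⊗ₜ[k] g) ⊗ₜ[k] h)
    ∧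
    -- (ii) (b#h₍₁₎)·(σ⁻¹(S(h₍₃₎),h₍₄₎)#S(h₍₂₎)) ⊗ h₍₅₎ = (b#1) ⊗ h
    (∀ (b : B) (h : H) {n : ℕ} (h1 h2 h3 h4 h5 : Fin n → H), IsRep5 k H h h1 h2 h3 h4 h5 →
      ∑ i, (mult (b ⊗ₜ[k] h1 i) ((σi (𝑺 (h3 i)) (h4 i)) ⊗ₜ[k] 𝑺 (h2 i))) ⊗ₜ[k] h5 i
        = (b ⊗ₜ[k] (1 : H)) ⊗ₜ[k] h) := by
  refine ⟨fun b g h {n} h1 h2 h3 h4 hh => ?_, fun b h {n} h1 h2 h3 h4 h5 hh => ?_⟩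
  · let F : H →ₗ[k] (B ⊗[k] H) ⊗[k] H :=
      Can ∘ₗ TensorProduct.map (mult (b ⊗ₜ[k] g) ∘ₗ translationLeg σi)
        (TensorProduct.mk k B H 1) ∘ₗ Δ4 k H
    have hF : F = TensorProduct.mk k (B ⊗[k] H) H (b ⊗ₜ g) := by
      refine IsMultMatrix.linearMap_ext fun n c hc i j => ?_
      have hC : ∀ (p : B ⊗[k] H) (l : Fin n), Can (p ⊗ₜ[k] ((1 : B) ⊗ₜ[k] c l j))
          = ∑ m, mult p (1 ⊗ₜ c l m) ⊗ₜ c m j := fun p l =>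
        hCan p 1 _ _ _ (hc.comul_eq l j)
      calc F (c i j)
          = ∑ l, ∑ m, mult (mult (b ⊗ₜ g) (translationLeg σi (Δ3 k H (c i l)))) (1 ⊗ₜ c l m)
              ⊗ₜ[k] c m j := by
            simp only [F, LinearMap.comp_apply, Δ4, hc.comul_eq, map_sum, LinearMap.rTensor_tmul,
              TensorProduct.map_tmul, TensorProduct.mk_apply, hC]
        _ = ∑ m, mult (b ⊗ₜ g) (∑ l, mult (translationLeg σi (Δ3 k H (c i l))) (1 ⊗ₜ c l m))
              ⊗ₜ[k] c m j := by
            rw [Finset.sum_comm]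
            simp only [mult_assoc_one hcd hmult, map_sum, TensorProduct.sum_tmul]
        _ = _ := by
            simp only [translation_mult_one hcd hmult hc]
            rw [Finset.sum_eq_single i]
            · simp [mult_one_one hcd hmult]
            · intro m _ hm
              simp [hm.symm]
            · simp
    have h0 := LinearMap.congr_fun hF h
    rw [IsRep4] at hh
    simp only [F, LinearMap.comp_apply, hh, map_sum, TensorProduct.map_tmul,
      translationLeg_tmul, TensorProduct.mk_apply] at h0
    rw [map_sum]
    exact h0
  · let G : ((H ⊗[k] H) ⊗[k] H) ⊗[k] H →ₗ[k] B ⊗[k] H :=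
      TensorProduct.lift ((mult ∘ₗ TensorProduct.mk k B H b).compl₂ (translationLeg σi)) ∘ₗ
        (TensorProduct.assoc k H (H ⊗[k] H) H).toLinearMap ∘ₗ
        LinearMap.rTensor H (TensorProduct.assoc k H H H).toLinearMap
    have hG : ∀ x y z w : H, G (((x ⊗ₜ y) ⊗ₜ z) ⊗ₜ w)
        = mult (b ⊗ₜ x) (σi (𝑺 z) w ⊗ₜ 𝑺 y) := fun x y z w => by simp [G]
    have hGΔ : ∀ (n : ℕ) (c : Fin n → Fin n → H), IsMultMatrix k c → ∀ i j,
        G (Δ4 k H (c i j)) = if i = j then b ⊗ₜ 1 else 0 := fun n c hc i j => by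
      simp only [hc.delta4, map_sum, hG, mult_translation hcd hmult hc]
    have hF : LinearMap.rTensor H G ∘ₗ Δ5 k H = TensorProduct.mk k (B ⊗[k] H) H (b ⊗ₜ 1) := by
      refine IsMultMatrix.linearMap_ext fun n c hc i j => ?_
      simp [Δ5, hc.comul_eq, hGΔ n c hc, TensorProduct.ite_tmul]
    have h0 := LinearMap.congr_fun hF h
    rw [IsRep5] at hh
    simpa only [LinearMap.comp_apply, hh, map_sum, LinearMap.rTensor_tmul, hG,
      TensorProduct.mk_apply] using h0

end Statements
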